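/- Every band (idempotent semigroup) satisfying the generalized entropic property is medial. That is, if M is a magma whose multiplication is associative and idempotent, and there exist binary terms t, s with (x*y)*(u*v) = t(x,u)*s(y,v) for all x,y,u,v in M, then (x*y)*(u*v) = (x*u)*(y*v) for all x,y,u,v in M. -/

import Mathlib

/-- Evaluation of a binary term (an element of the free magma on two
generators) in a magma `M` under the assignment `0 ↦ a`, `1 ↦ b`. -/
def evalBin {M : Type*} [Mul M] (t : FreeMagma (Fin 2)) (a b : M) : M :=
  FreeMagma.lift ![a, b] t

/-- A magma satisfies the generalized entropic property if there are binary
terms `t`, `s` with `(x*y)*(u*v) = t(x,u)*s(y,v)`. -/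
def GEP (M : Type*) [Mul M] : Prop :=
  ∃ t s : FreeMagma (Fin 2),
    ∀ x y u v : M, (x * y) * (u * v) = evalBin t x u * evalBin s y v

/-!
The argument is of Eckmann–Hilton type. Inside `eMe`, where `e` acts as an identity, the
factorization `y * u = t(e, u) * s(y, e)` forces `t(e, u) = u` and `s(y, e) = y`, so `eMe` is a
semilattice. Since `a * b = a * (b * a) * b` has `b * a` as a factor, `e * (a * b) * e` lies below
`e * (b * a) * e` in it, and by symmetry the two are equal. Mediality is then obtained from
`x * y * u * v = (x * y * u * v) * (x * y * u * v)` by exchanging `y` and `u`, in the right copy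
between two occurrences of `v` and in the left copy between two occurrences of `x`.
-/

theorem evalBin_mem_closure {M : Type*} [Mul M] (t : FreeMagma (Fin 2)) (a b : M) :
    evalBin t a b ∈ Subsemigroup.closure {a, b} := by
  induction t with
  | ih1 i => fin_cases i <;> exact Subsemigroup.mem_closure_of_mem (by simp [evalBin])
  | ih2 p q hp hq => simpa only [evalBin, map_mul] using mul_mem hp hq

theorem eq_of_mem_closure_pair_self {M : Type*} [Mul M] {e x : M} (he : IsIdempotentElem e)
    (hx : x ∈ Subsemigroup.closure {e, e}) : x = e := by
  induction hx using Subsemigroup.closure_induction with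
  | mem y hy => simpa using hy
  | mul y z _ _ hy hz => rw [hy, hz, he.eq]

section Semigroup

variable {M : Type*} [Semigroup M]

theorem closure_pair_le_corner {e a : M} (he : IsIdempotentElem e)
    (ha : a ∈ Subsemigroup.corner e) :
    Subsemigroup.closure {e, a} ≤ Subsemigroup.corner e := by
  have he_mem : e ∈ Subsemigroup.corner e := (Subsemigroup.mem_corner_iff he).2 ⟨he, he⟩
  exact Subsemigroup.closure_le.2 (Set.pair_subset he_mem ha)

theorem commute_of_mem_corner_of_factorization {f g : M → M → M}
    (hf : ∀ x u, f x u ∈ Subsemigroup.closure {x, u})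
    (hg : ∀ y v, g y v ∈ Subsemigroup.closure {y, v})
    (hfg : ∀ x y u v, (x * y) * (u * v) = f x u * g y v)
    {e a b : M} (he : IsIdempotentElem e)
    (ha : a ∈ Subsemigroup.corner e) (hb : b ∈ Subsemigroup.corner e) : Commute a b := by
  have hf_mem {u : M} (hu : u ∈ Subsemigroup.corner e) : f e u ∈ Subsemigroup.corner e :=
    closure_pair_le_corner he hu (hf e u)
  have hg_mem {y : M} (hy : y ∈ Subsemigroup.corner e) : g y e ∈ Subsemigroup.corner e :=
    closure_pair_le_corner he hy (Set.pair_comm y e ▸ hg y e)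
  simp only [Subsemigroup.mem_corner_iff he] at hf_mem hg_mem ha hb
  have hmul {y u : M} (hy : e * y = y ∧ y * e = y) (hu : e * u = u ∧ u * e = u) :
      y * u = f e u * g y e := by
    simpa only [hy.1, hu.2] using hfg e y u e
  have hf_eq {u : M} (hu : e * u = u ∧ u * e = u) : f e u = u :=
    calc
      f e u = f e u * g e e := by rw [eq_of_mem_closure_pair_self he (hg e e), (hf_mem hu).2]
      _ = e * u := (hmul ⟨he, he⟩ hu).symm
      _ = u := hu.1
  have hg_eq {y : M} (hy : e * y = y ∧ y * e = y) : g y e = y :=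
    calc
      g y e = f e e * g y e := by rw [eq_of_mem_closure_pair_self he (hf e e), (hg_mem hy).1]
      _ = y * e := (hmul hy ⟨he, he⟩).symm
      _ = y := hy.2
  calc
    a * b = f e b * g a e := hmul ha hb
    _ = b * a := by rw [hf_eq hb, hg_eq ha]

section Band

variable (hidem : ∀ x : M, x * x = x)
include hidem

theorem corner_mul_corner_right (e a b : M) :
    e * (a * b) * e * (e * b * e) = e * (a * b) * e :=
  calc
    e * (a * b) * e * (e * b * e) = e * a * (b * (e * e) * b * e) := by simp only [mul_assoc]
    _ = e * a * (b * e * (b * e)) := by rw [hidem]; simp only [mul_assoc]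
    _ = e * (a * b) * e := by rw [hidem]; simp only [mul_assoc]

theorem corner_left_mul_corner (e a b : M) :
    e * a * e * (e * (a * b) * e) = e * (a * b) * e :=
  calc
    e * a * e * (e * (a * b) * e) = e * a * (e * e) * (a * (b * e)) := by simp only [mul_assoc]
    _ = e * a * (e * a) * (b * e) := by rw [hidem]; simp only [mul_assoc]
    _ = e * (a * b) * e := by rw [hidem]; simp only [mul_assoc]

variable (hcomm : ∀ e a b : M, Commute (e * a * e) (e * b * e))
include hcomm

theorem corner_mul_corner_swap (e a b : M) :
    e * (a * b) * e * (e * (b * a) * e) = e * (a * b) * e := by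
  have hab : a * b = a * (b * a) * b := by
    simpa only [mul_assoc] using (hidem (a * b)).symm
  have habsorb : e * (a * b) * e * (e * (a * (b * a)) * e) = e * (a * b) * e := by
    rw [(hcomm e _ _).eq, hab, corner_left_mul_corner hidem]
  rw [← habsorb, mul_assoc, corner_mul_corner_right hidem]

theorem corner_mul_swap (e a b : M) : e * (a * b) * e = e * (b * a) * e :=
  calc
    e * (a * b) * e = e * (a * b) * e * (e * (b * a) * e) :=
      (corner_mul_corner_swap hidem hcomm e a b).symm
    _ = e * (b * a) * e * (e * (a * b) * e) := (hcomm e _ _).eq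
    _ = e * (b * a) * e := corner_mul_corner_swap hidem hcomm e b a

theorem corner_mul_eq_corner_mul (e a b : M) : e * (a * b) * e = e * a * e * (b * e) :=
  calc
    e * (a * b) * e = e * (b * a) * e := corner_mul_swap hidem hcomm e a b
    _ = e * (e * b * a) * e := by simp only [← mul_assoc, hidem]
    _ = e * (a * (e * b)) * e := corner_mul_swap hidem hcomm e (e * b) a
    _ = e * a * e * (b * e) := by simp only [mul_assoc]

theorem corner_mul_swap_mul (e a b c : M) : e * (a * b * c) * e = e * (b * a * c) * e := by
  rw [corner_mul_eq_corner_mul hidem hcomm e (a * b), corner_mul_swap hidem hcomm e a b,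
    ← corner_mul_eq_corner_mul hidem hcomm e (b * a)]

theorem medial_of_commute_corners (x y u v : M) : (x * y) * (u * v) = (x * u) * (y * v) := by
  have hx : x * (y * u * v) * x = x * (u * y * v) * x :=
    corner_mul_swap_mul hidem hcomm x y u v
  have hv : v * (x * (y * u)) * v = v * (x * (u * y)) * v := by
    rw [corner_mul_swap hidem hcomm v x, corner_mul_swap_mul hidem hcomm v y u x,
      corner_mul_swap hidem hcomm v (u * y)]
  calc
    (x * y) * (u * v) = x * y * u * v * (x * y * u * v) := by rw [hidem]; simp only [mul_assoc]
    _ = x * y * u * (v * (x * (y * u)) * v) := by simp only [mul_assoc]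
    _ = x * (y * u * v) * x * (u * y * v) := by rw [hv]; simp only [mul_assoc]
    _ = x * u * y * v * (x * u * y * v) := by rw [hx]; simp only [mul_assoc]
    _ = (x * u) * (y * v) := by rw [hidem]; simp only [mul_assoc]

end Band

theorem stmt_8_general (hidem : ∀ x : M, x * x = x) {f g : M → M → M}
    (hf : ∀ x u, f x u ∈ Subsemigroup.closure {x, u})
    (hg : ∀ y v, g y v ∈ Subsemigroup.closure {y, v})
    (hfg : ∀ x y u v, (x * y) * (u * v) = f x u * g y v) (x y u v : M) :
    (x * y) * (u * v) = (x * u) * (y * v) := by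
  have hcomm (e a b : M) : Commute (e * a * e) (e * b * e) :=
    commute_of_mem_corner_of_factorization hf hg hfg (hidem e) ⟨a, rfl⟩ ⟨b, rfl⟩
  exact medial_of_commute_corners hidem hcomm x y u v

end Semigroup

/-- A band (idempotent semigroup) satisfying the generalized entropic
property is medial. -/
theorem stmt_8 {M : Type*} [Mul M]
    (hassoc : ∀ x y z : M, (x * y) * z = x * (y * z))
    (hidem : ∀ x : M, x * x = x)
    (hGEP : GEP M) :
    ∀ x y u v : M, (x * y) * (u * v) = (x * u) * (y * v) := by
  let _ : Semigroup M := { mul_assoc := hassoc }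
  obtain ⟨t, s, hts⟩ := hGEP
  exact stmt_8_general hidem (evalBin_mem_closure t) (evalBin_mem_closure s) hts
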